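/- Let O = (0,0), A = (1,0), B = (0,1), C = (1,1) in ℝ². For values u(O), u(A), u(B), u(C) ∈ ℝ², define the square-lattice spring energy E_spr(u) = ½[ (‖u(A)−u(O)‖−1)² + (‖u(B)−u(O)‖−1)² + (‖u(A)−u(C)‖−1)² + (‖u(B)−u(C)‖−1)² ], and define ‖∇u‖²_{L²(U)} = ½( ‖G₁‖² + ‖G₂‖² ), where G₁ is the affine interpolation gradient on the triangle with vertices O, A, C (from the values u(O), u(A), u(C)) and G₂ is the affine interpolation gradient on the triangle with vertices O, B, C. Then there exist constants C₁ > 0, C₂ > 0 and D₂ ≥ 0, independent of u, such that for all values u(O), u(A), u(B), u(C) ∈ ℝ²: C₂ ( ‖∇u‖²_{L²(U)} − D₂ ) ≤ E_spr(u) ≤ C₁ ( ‖∇u‖²_{L²(U)} + 1 ). -/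

import Mathlib

/-- The matrix with columns `v` and `w`. -/
noncomputable def colMat (v w : EuclideanSpace ℝ (Fin 2)) : Matrix (Fin 2) (Fin 2) ℝ :=
  Matrix.of fun i j => ![v i, w i] j

/-- The affine interpolation gradient determined by the points `x₁, x₂, x₃` and the
values `u₁, u₂, u₃`: `(u₁−u₂ | u₂−u₃) · (x₁−x₂ | x₂−x₃)⁻¹`. -/
noncomputable def gradMat (x₁ x₂ x₃ u₁ u₂ u₃ : EuclideanSpace ℝ (Fin 2)) :
    Matrix (Fin 2) (Fin 2) ℝ :=
  colMat (u₁ - u₂) (u₂ - u₃) * (colMat (x₁ - x₂) (x₂ - x₃))⁻¹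

/-- Squared Frobenius norm of a 2×2 matrix. -/
noncomputable def frobSq (M : Matrix (Fin 2) (Fin 2) ℝ) : ℝ :=
  ∑ i, ∑ j, (M i j) ^ 2

/-- The point `(a, b) ∈ ℝ²`. -/
noncomputable def pt (a b : ℝ) : EuclideanSpace ℝ (Fin 2) :=
  (WithLp.equiv 2 (Fin 2 → ℝ)).symm ![a, b]

/-- The square-lattice spring energy of the unit cell, for values `uO, uA, uB, uC`
at the vertices `O = (0,0)`, `A = (1,0)`, `B = (0,1)`, `C = (1,1)`. -/
noncomputable def sqSpringEnergy (uO uA uB uC : EuclideanSpace ℝ (Fin 2)) : ℝ :=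
  (1 / 2) * ((‖uA - uO‖ - 1) ^ 2 + (‖uB - uO‖ - 1) ^ 2 +
    (‖uA - uC‖ - 1) ^ 2 + (‖uB - uC‖ - 1) ^ 2)

/-- `‖∇u‖²_{L²(U)}` for the square unit cell, triangulated by the triangles `OAC` and
`OBC` (each of area `½`). -/
noncomputable def sqGradSq (uO uA uB uC : EuclideanSpace ℝ (Fin 2)) : ℝ :=
  (1 / 2) * (frobSq (gradMat (pt 0 0) (pt 1 0) (pt 1 1) uO uA uC) +
    frobSq (gradMat (pt 0 0) (pt 0 1) (pt 1 1) uO uB uC))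

/-!
Both legs of each triangle are edges of the square, and they are orthonormal, so the edge matrix
inverted in the interpolation gradient is orthogonal. Hence `‖∇u‖²_{L²(U)}` is half the sum of the
squared lengths of the four image edges, and the two quantities are compared edge by edge through
`(a - 1)² ≤ a² + 1` for `a ≥ 0` and `a² ≤ 2((a - 1)² + 1)`.
-/

open Matrix
open scoped RealInnerProductSpace

section OrderedRing

variable {R : Type*} [CommRing R] [LinearOrder R] [IsStrictOrderedRing R]

theorem sub_sq_le_sq_add_sq {a b : R} (hab : 0 ≤ a * b) : (a - b) ^ 2 ≤ a ^ 2 + b ^ 2 := by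
  linarith [sub_sq a b]

theorem sq_le_two_mul_sub_sq_add_sq (a b : R) : a ^ 2 ≤ 2 * ((a - b) ^ 2 + b ^ 2) := by
  simpa only [sub_add_cancel] using add_sq_le (a := a - b) (b := b)

end OrderedRing

theorem frobSq_eq_trace (M : Matrix (Fin 2) (Fin 2) ℝ) : frobSq M = (M * Mᵀ).trace := by
  simp only [frobSq, trace, diag_apply, mul_apply, transpose_apply, sq]

theorem frobSq_mul_of_mem_orthogonalGroup (M : Matrix (Fin 2) (Fin 2) ℝ)
    {Q : Matrix (Fin 2) (Fin 2) ℝ} (hQ : Q ∈ orthogonalGroup (Fin 2) ℝ) :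
    frobSq (M * Q) = frobSq M := by
  have hQQ : Q * Qᵀ = 1 := (mem_orthogonalGroup_iff _ _).mp hQ
  rw [frobSq_eq_trace, frobSq_eq_trace, transpose_mul, Matrix.mul_assoc, ← Matrix.mul_assoc Q,
    hQQ, Matrix.one_mul]

theorem frobSq_colMat (v w : EuclideanSpace ℝ (Fin 2)) :
    frobSq (colMat v w) = ‖v‖ ^ 2 + ‖w‖ ^ 2 := by
  simp only [frobSq, colMat, of_apply, EuclideanSpace.real_norm_sq_eq, Fin.sum_univ_two,
    cons_val_zero, cons_val_one]
  ring

theorem transpose_colMat_mul_colMat (v w : EuclideanSpace ℝ (Fin 2)) :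
    (colMat v w)ᵀ * colMat v w = gram ℝ ![v, w] := by
  ext i j
  fin_cases i <;> fin_cases j <;>
    simp [colMat, gram_apply, mul_apply, PiLp.inner_apply, mul_comm, -inner_self_eq_norm_sq_to_K]

theorem colMat_mem_orthogonalGroup {v w : EuclideanSpace ℝ (Fin 2)}
    (h : Orthonormal ℝ ![v, w]) : colMat v w ∈ orthogonalGroup (Fin 2) ℝ := by
  rw [mem_orthogonalGroup_iff', transpose_colMat_mul_colMat]
  ext i j
  rw [gram_apply, orthonormal_iff_ite.mp h, one_apply]

theorem frobSq_gradMat_of_orthonormal {x₁ x₂ x₃ : EuclideanSpace ℝ (Fin 2)}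
    (h : Orthonormal ℝ ![x₁ - x₂, x₂ - x₃]) (u₁ u₂ u₃ : EuclideanSpace ℝ (Fin 2)) :
    frobSq (gradMat x₁ x₂ x₃ u₁ u₂ u₃) = ‖u₁ - u₂‖ ^ 2 + ‖u₂ - u₃‖ ^ 2 := by
  have hQ := colMat_mem_orthogonalGroup h
  have hinv : (colMat (x₁ - x₂) (x₂ - x₃))⁻¹ ∈ orthogonalGroup (Fin 2) ℝ := by
    rw [inv_eq_left_inv ((mem_orthogonalGroup_iff' _ _).mp hQ)]
    exact Unitary.star_mem hQ
  rw [gradMat, frobSq_mul_of_mem_orthogonalGroup _ hinv, frobSq_colMat]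

theorem pt_sub_pt (a b c d : ℝ) : pt a b - pt c d = pt (a - c) (b - d) := by
  ext i
  fin_cases i <;> simp [pt]

theorem inner_pt_pt (a b c d : ℝ) : ⟪pt a b, pt c d⟫ = a * c + b * d := by
  simp [pt, PiLp.inner_apply, mul_comm]

theorem norm_pt (a b : ℝ) : ‖pt a b‖ = √(a ^ 2 + b ^ 2) := by
  simp [pt, EuclideanSpace.norm_eq]

theorem orthonormal_edges_OAC : Orthonormal ℝ ![pt 0 0 - pt 1 0, pt 1 0 - pt 1 1] := by
  simp [orthonormal_vecCons_iff, pt_sub_pt, norm_pt, inner_pt_pt]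

theorem orthonormal_edges_OBC : Orthonormal ℝ ![pt 0 0 - pt 0 1, pt 0 1 - pt 1 1] := by
  simp [orthonormal_vecCons_iff, pt_sub_pt, norm_pt, inner_pt_pt]

theorem sqGradSq_eq_sum_norm_sq (uO uA uB uC : EuclideanSpace ℝ (Fin 2)) :
    sqGradSq uO uA uB uC =
      (1 / 2) * (‖uA - uO‖ ^ 2 + ‖uB - uO‖ ^ 2 + ‖uA - uC‖ ^ 2 + ‖uB - uC‖ ^ 2) := by
  rw [sqGradSq, frobSq_gradMat_of_orthonormal orthonormal_edges_OAC,
    frobSq_gradMat_of_orthonormal orthonormal_edges_OBC, norm_sub_rev uO, norm_sub_rev uO]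
  ring

theorem sqSpringEnergy_le_sqGradSq_add_two (uO uA uB uC : EuclideanSpace ℝ (Fin 2)) :
    sqSpringEnergy uO uA uB uC ≤ sqGradSq uO uA uB uC + 2 := by
  have edge_le (v : EuclideanSpace ℝ (Fin 2)) : (‖v‖ - 1) ^ 2 ≤ ‖v‖ ^ 2 + 1 ^ 2 :=
    sub_sq_le_sq_add_sq (by positivity)
  rw [sqSpringEnergy, sqGradSq_eq_sum_norm_sq]
  linarith [edge_le (uA - uO), edge_le (uB - uO), edge_le (uA - uC), edge_le (uB - uC)]

theorem sqGradSq_le_two_mul_sqSpringEnergy_add_four (uO uA uB uC : EuclideanSpace ℝ (Fin 2)) :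
    sqGradSq uO uA uB uC ≤ 2 * sqSpringEnergy uO uA uB uC + 4 := by
  have le_edge (v : EuclideanSpace ℝ (Fin 2)) : ‖v‖ ^ 2 ≤ 2 * ((‖v‖ - 1) ^ 2 + 1 ^ 2) :=
    sq_le_two_mul_sub_sq_add_sq ‖v‖ 1
  rw [sqSpringEnergy, sqGradSq_eq_sum_norm_sq]
  linarith [le_edge (uA - uO), le_edge (uB - uO), le_edge (uA - uC), le_edge (uB - uC)]

theorem sqGradSq_nonneg (uO uA uB uC : EuclideanSpace ℝ (Fin 2)) :
    0 ≤ sqGradSq uO uA uB uC := by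
  rw [sqGradSq_eq_sum_norm_sq]
  positivity

/-- The spring energy of the square-lattice unit cell is bounded above and below by the
`L²` norm of the gradient of the piecewise affine interpolation: there are constants
`C₁, C₂ > 0` and `D₂ ≥ 0`, independent of `u`, such that for all values
`uO, uA, uB, uC ∈ ℝ²`,
`C₂(‖∇u‖²_{L²(U)} − D₂) ≤ E_spr(u) ≤ C₁(‖∇u‖²_{L²(U)} + 1)`. -/
theorem square_lattice_energy_bounds :
    ∃ C₁ C₂ D₂ : ℝ, 0 < C₁ ∧ 0 < C₂ ∧ 0 ≤ D₂ ∧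
      ∀ uO uA uB uC : EuclideanSpace ℝ (Fin 2),
        C₂ * (sqGradSq uO uA uB uC - D₂) ≤ sqSpringEnergy uO uA uB uC ∧
        sqSpringEnergy uO uA uB uC ≤ C₁ * (sqGradSq uO uA uB uC + 1) := by
  refine ⟨2, 1 / 2, 4, by norm_num, by norm_num, by norm_num, fun uO uA uB uC => ⟨?_, ?_⟩⟩
  · linarith [sqGradSq_le_two_mul_sqSpringEnergy_add_four uO uA uB uC]
  · linarith [sqSpringEnergy_le_sqGradSq_add_two uO uA uB uC, sqGradSq_nonneg uO uA uB uC]
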